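/- arXiv:1711.02724 — 7 statements merged into one kernel-verified Lean document; each statement's English description precedes it below -/
import Mathlib

section
/- Let f : ℝ → ℝ be twice differentiable on [0,1] with 0 ≤ f(x) ≤ 1 for all x ∈ [0,1]. Then the function x ↦ log(1 − t·f(x)) is convex on [0,1] for every t ∈ (0,1) if and only if (1 − f(x))·(−f''(x)) ≥ (f'(x))² for all x ∈ [0,1]. -/
lemma aux_hasDeriv_log (f : ℝ → ℝ) (t x : ℝ) (hf : DifferentiableAt ℝ f x)
    (h : 0 < 1 - t * f x) :
    HasDerivAt (fun x => Real.log (1 - t * f x)) (-(t * deriv f x) / (1 - t * f x)) x :=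
  ((hf.hasDerivAt.const_mul t).const_sub 1).log h.ne'

lemma aux_hasDeriv_two (f : ℝ → ℝ) (t x : ℝ) (hf : DifferentiableAt ℝ f x)
    (hf' : DifferentiableAt ℝ (deriv f) x) (h : 0 < 1 - t * f x) :
    HasDerivAt (fun x => -(t * deriv f x) / (1 - t * f x))
      (t * ((1 - t * f x) * (-(deriv (deriv f) x)) - t * (deriv f x) ^ 2)
        / (1 - t * f x) ^ 2) x := by
  have h1 := ((hf'.hasDerivAt.const_mul t).fun_neg).fun_div
    ((hf.hasDerivAt.const_mul t).const_sub 1) h.ne'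
  refine h1.congr_deriv ?_
  ring

/-- For `f : ℝ → ℝ` twice differentiable on `[0,1]` with values in `[0,1]`,
the function `x ↦ log (1 - t * f x)` is convex on `[0,1]` for every `t ∈ (0,1)`
iff `(1 - f x) * (-f'' x) ≥ (f' x)^2` for all `x ∈ [0,1]`. -/
theorem convexOn_log_one_sub_mul_iff
    (f : ℝ → ℝ)
    (hf : ∀ x ∈ Set.Icc (0:ℝ) 1, DifferentiableAt ℝ f x)
    (hf' : ∀ x ∈ Set.Icc (0:ℝ) 1, DifferentiableAt ℝ (deriv f) x)
    (hf0 : ∀ x ∈ Set.Icc (0:ℝ) 1, 0 ≤ f x)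
    (hf1 : ∀ x ∈ Set.Icc (0:ℝ) 1, f x ≤ 1) :
    (∀ t ∈ Set.Ioo (0:ℝ) 1,
        ConvexOn ℝ (Set.Icc (0:ℝ) 1) (fun x => Real.log (1 - t * f x)))
      ↔ (∀ x ∈ Set.Icc (0:ℝ) 1,
          (1 - f x) * (-(deriv (deriv f) x)) ≥ (deriv f x) ^ 2) := by
  have hpos : ∀ t ∈ Set.Ioo (0:ℝ) 1, ∀ x ∈ Set.Icc (0:ℝ) 1, 0 < 1 - t * f x := by
    intro t ht x hx
    nlinarith [ht.1, ht.2, hf0 x hx, hf1 x hx]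
  constructor
  · intro H x hx
    have key : ∀ t ∈ Set.Ioo (0:ℝ) 1,
        t * (deriv f x) ^ 2 ≤ (1 - t * f x) * (-(deriv (deriv f) x)) := by
      intro t ht
      have hm := (H t ht).monotoneOn_deriv
        (fun y hy => (aux_hasDeriv_log f t y (hf y hy) (hpos t ht y hy)).differentiableAt)
      have hm2 : MonotoneOn (fun x => -(t * deriv f x) / (1 - t * f x)) (Set.Icc (0:ℝ) 1) :=
        hm.congr (fun y hy => (aux_hasDeriv_log f t y (hf y hy) (hpos t ht y hy)).deriv)
      have h0 := hm2.derivWithin_nonneg (x := x)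
      rw [(aux_hasDeriv_two f t x (hf x hx) (hf' x hx) (hpos t ht x hx)).hasDerivWithinAt.derivWithin
        (uniqueDiffOn_Icc zero_lt_one x hx)] at h0
      have hp := hpos t ht x hx
      by_contra hc
      push Not at hc
      have : t * ((1 - t * f x) * (-(deriv (deriv f) x)) - t * (deriv f x) ^ 2)
        / (1 - t * f x) ^ 2 < 0 :=
        div_neg_of_neg_of_pos (mul_neg_of_pos_of_neg ht.1 (by linarith)) (by positivity)
      linarith
    have hcl : Set.Icc (0:ℝ) 1 ⊆
        {t | t * (deriv f x) ^ 2 ≤ (1 - t * f x) * (-(deriv (deriv f) x))} := by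
      rw [← closure_Ioo (zero_ne_one)]
      exact closure_minimal key (isClosed_le (by fun_prop) (by fun_prop))
    have := hcl (Set.right_mem_Icc.2 zero_le_one)
    simpa using this
  · intro H t ht
    refine convexOn_of_hasDerivWithinAt2_nonneg (convex_Icc 0 1)
      (f' := fun x => -(t * deriv f x) / (1 - t * f x))
      (f'' := fun x => t * ((1 - t * f x) * (-(deriv (deriv f) x)) - t * (deriv f x) ^ 2)
        / (1 - t * f x) ^ 2)
      (fun y hy => (aux_hasDeriv_log f t y (hf y hy)
        (hpos t ht y hy)).continuousAt.continuousWithinAt)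
      (fun y hy => (aux_hasDeriv_log f t y (hf y (interior_subset hy))
        (hpos t ht y (interior_subset hy))).hasDerivWithinAt)
      (fun y hy => (aux_hasDeriv_two f t y (hf y (interior_subset hy)) (hf' y (interior_subset hy))
        (hpos t ht y (interior_subset hy))).hasDerivWithinAt) ?_
    intro x hxi
    have hx := interior_subset hxi
    have hH := H x hx
    have hx1 := hf1 x hx
    have hx0 := hf0 x hx
    have hneg : 0 ≤ -(deriv (deriv f) x) := by
      rcases hx1.lt_or_eq with h | h
      · by_contra hc
        push Not at hc
        nlinarith [sq_nonneg (deriv f x)]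
      · by_contra hc
        have hd : deriv f x = 0 := by
          rw [h] at hH
          nlinarith [sq_nonneg (deriv f x)]
        have hmin := isLocalMin_of_deriv_deriv_pos (f := f) (x₀ := x) (by linarith) hd
          (hf x hx).continuousAt
        have hev : f =ᶠ[nhds x] fun _ => 1 := by
          filter_upwards [hmin, mem_interior_iff_mem_nhds.1 hxi] with y hy hy2
          exact le_antisymm (hf1 y hy2) (h ▸ hy)
        have h2 := hev.deriv.deriv_eq
        simp at h2
        linarith
    have ht0 := ht.1
    have ht1 := ht.2
    apply div_nonneg _ (sq_nonneg _)
    apply mul_nonneg ht0.le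
    have h1 : (1 - f x) * (-(deriv (deriv f) x)) ≤ (1 - t * f x) * (-(deriv (deriv f) x)) :=
      mul_le_mul_of_nonneg_right (by nlinarith) hneg
    have h2 : t * (deriv f x) ^ 2 ≤ (deriv f x) ^ 2 := by nlinarith [sq_nonneg (deriv f x)]
    linarith
end

section
/- Let g : ℝ → ℝ be defined by g(x) = x·(1 − x/2). Then for every t ∈ (0,1), the function x ↦ log(1 − t·g(x)) is convex on the interval [0,1]. -/
/-- For `g x = x * (1 - x/2)` and any `t ∈ (0,1)`, the function
`x ↦ log (1 - t * g x)` is convex on `[0,1]`. -/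
theorem convexOn_log_one_sub_mul_g
    (g : ℝ → ℝ) (hg : ∀ x, g x = x * (1 - x / 2)) :
    ∀ t ∈ Set.Ioo (0:ℝ) 1,
      ConvexOn ℝ (Set.Icc (0:ℝ) 1) (fun x => Real.log (1 - t * g x)) := by
  rintro t ⟨ht0, ht1⟩
  simp only [hg]
  have hpos : ∀ x : ℝ, 0 < 1 - t * (x * (1 - x / 2)) := by
    intro x
    nlinarith [mul_nonneg ht0.le (sq_nonneg (x - 1))]
  have hd : ∀ x : ℝ, HasDerivAt (fun x : ℝ => 1 - t * (x * (1 - x / 2))) (t * (x - 1)) x := by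
    intro x
    have h := (((hasDerivAt_id x).mul (((hasDerivAt_id x).div_const 2).const_sub 1)).const_mul
      t).const_sub 1
    refine h.congr_deriv ?_
    simp only [id]
    ring
  have hd1 : ∀ x : ℝ, HasDerivAt (fun x : ℝ => t * (x - 1)) t x := by
    intro x
    simpa using ((hasDerivAt_id x).sub_const 1).const_mul t
  have hl := fun x : ℝ => (hd x).log (hpos x).ne'
  have hl2 := fun x : ℝ => (hd1 x).div (hd x) (hpos x).ne'
  refine convexOn_of_hasDerivWithinAt2_nonneg (convex_Icc 0 1)
    (fun x _ => (hl x).continuousAt.continuousWithinAt)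
    (fun x _ => (hl x).hasDerivWithinAt) (fun x _ => (hl2 x).hasDerivWithinAt) ?_
  intro x hx
  obtain ⟨hx0, hx1⟩ := interior_subset hx
  apply div_nonneg _ (sq_nonneg _)
  have h1 : 0 ≤ t * (1 - t * (1 - x * (1 - x / 2))) := by
    apply mul_nonneg ht0.le
    have h2 : 0 ≤ x * (1 - x / 2) := mul_nonneg hx0 (by linarith)
    nlinarith [mul_nonneg ht0.le h2]
  nlinarith [h1]
end

section
/- Let k ≥ 1 be an integer, let α ∈ (0,1] be a real number, let V be a finite set with |V| = k, and for each v ∈ V let F_v be a finite index set with reals x_{v,f} ∈ [0,1] for f ∈ F_v satisfying ∑_{f ∈ F_v} x_{v,f} ≤ 1. Then ∫_0^1 ∏_{v ∈ V} ∏_{f ∈ F_v} (1 − t·α·x_{v,f}) dt ≥ (1 − (1−α)^{k+1}) / (α(k+1)). In particular, when α = 1 the integral is at least 1/(k+1). -/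
theorem one_sub_sum_le_prod_aux {κ : Type*} (s : Finset κ) (y : κ → ℝ)
    (h0 : ∀ f ∈ s, 0 ≤ y f) (h1 : ∀ f ∈ s, y f ≤ 1) :
    1 - ∑ f ∈ s, y f ≤ ∏ f ∈ s, (1 - y f) ∧ ∏ f ∈ s, (1 - y f) ≤ 1 := by
  classical
  induction s using Finset.induction_on with
  | empty => simp
  | insert a s ha ih =>
    obtain ⟨i1, i2⟩ := ih (fun f hf => h0 f (Finset.mem_insert_of_mem hf))
      (fun f hf => h1 f (Finset.mem_insert_of_mem hf))
    have a0 := h0 a (Finset.mem_insert_self a s)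
    have a1 := h1 a (Finset.mem_insert_self a s)
    have p0 : 0 ≤ ∏ f ∈ s, (1 - y f) := Finset.prod_nonneg fun f hf =>
      sub_nonneg.2 (h1 f (Finset.mem_insert_of_mem hf))
    rw [Finset.sum_insert ha, Finset.prod_insert ha]
    constructor <;> nlinarith

/-- Deterministic core of the warm-up hypergraph-matching guarantee: for an
integer `k ≥ 1`, `α ∈ (0,1]`, a finite set `V` of size `k`, and for each
`v ∈ V` a finite family `(x v f)_{f ∈ F v}` of reals in `[0,1]` with
`∑_{f ∈ F v} x v f ≤ 1`,
`∫_0^1 ∏_{v ∈ V} ∏_{f ∈ F v} (1 - t * α * x v f) dt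
  ≥ (1 - (1-α)^(k+1)) / (α * (k+1))`. -/
theorem integral_prod_prod_ge
    {ι ι' : Type*} (k : ℕ) (hk : 1 ≤ k) (α : ℝ) (hα : α ∈ Set.Ioc (0:ℝ) 1)
    (V : Finset ι) (hV : V.card = k)
    (F : ι → Finset ι') (x : ι → ι' → ℝ)
    (hx0 : ∀ v ∈ V, ∀ f ∈ F v, 0 ≤ x v f)
    (hx1 : ∀ v ∈ V, ∀ f ∈ F v, x v f ≤ 1)
    (hsum : ∀ v ∈ V, ∑ f ∈ F v, x v f ≤ 1) :
    (∫ t in (0:ℝ)..1, ∏ v ∈ V, ∏ f ∈ F v, (1 - t * α * x v f))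
      ≥ (1 - (1 - α) ^ (k + 1)) / (α * (k + 1)) := by
  obtain ⟨ha0, ha1⟩ := hα
  have key : (∫ t in (0:ℝ)..1, (1 - α * t) ^ k)
      = (1 - (1 - α) ^ (k + 1)) / (α * (k + 1)) := by
    rw [intervalIntegral.integral_comp_sub_mul (fun u : ℝ => u ^ k) ha0.ne' 1, integral_pow]
    simp only [smul_eq_mul, mul_one, mul_zero, sub_zero, one_pow]
    field_simp
  rw [ge_iff_le, ← key]
  apply intervalIntegral.integral_mono_on zero_le_one
  · exact Continuous.intervalIntegrable (by fun_prop) _ _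
  · exact Continuous.intervalIntegrable (by fun_prop) _ _
  · rintro t ⟨ht0, ht1⟩
    have hta0 : 0 ≤ t * α := by positivity
    have hta1 : t * α ≤ 1 := by nlinarith
    rw [← hV, ← Finset.prod_const]
    apply Finset.prod_le_prod
    · intro v _
      linarith
    · intro v hv
      have h := (one_sub_sum_le_prod_aux (F v) (fun f => t * α * x v f)
        (fun f hf => mul_nonneg hta0 (hx0 v hv f hf))
        (fun f hf => mul_le_one₀ hta1 (hx0 v hv f hf) (hx1 v hv f hf))).1
      rw [← Finset.mul_sum] at h
      have := mul_le_mul_of_nonneg_left (hsum v hv) hta0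
      linarith
end

section
/- For all real numbers α₁ ≥ 0, α₂ ≥ 0 and β₁ with 0 ≤ β₁ ≤ α₁(1 − α₁/2), it holds that β₁ + α₂(1 − β₁ − α₂/2) ≤ 5/8. Moreover, equality is attained at α₁ = 1, β₁ = 1/2, α₂ = 1/2. -/
/-- The optimization problem determining the `(8/5)k` ratio of the two-chance
algorithm for stochastic `k`-set packing: for `α₁, α₂ ≥ 0` and
`0 ≤ β₁ ≤ α₁ (1 - α₁/2)`, one has `β₁ + α₂ (1 - β₁ - α₂/2) ≤ 5/8`, with
equality at `α₁ = 1`, `β₁ = 1/2`, `α₂ = 1/2`. -/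
theorem two_chance_opt :
    (∀ α₁ α₂ β₁ : ℝ, 0 ≤ α₁ → 0 ≤ α₂ → 0 ≤ β₁ → β₁ ≤ α₁ * (1 - α₁ / 2) →
        β₁ + α₂ * (1 - β₁ - α₂ / 2) ≤ 5 / 8)
    ∧ ((1:ℝ) / 2 + (1 / 2) * (1 - 1 / 2 - (1 / 2) / 2) = 5 / 8) := by
  refine ⟨?_, by norm_num⟩
  intro a b c _ _ hc h
  have h1 : c ≤ 1 / 2 := by nlinarith [sq_nonneg (a - 1)]
  have h2 : c ^ 2 ≤ 1 / 4 := by nlinarith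
  nlinarith [sq_nonneg (b - (1 - c))]
end

section
/- Define γ₁ = 1/2 and γ_{t+1} = (1 + γ_t²)/2, and define sequences (α*_t) and (β*_t) recursively by α*_t = 1 − ∑_{t' < t} β*_{t'} and β*_t = (α*_t)²/2 (so β*_t = (1/2)(1 − ∑_{t'<t}β*_{t'})²). Then for all t ≥ 1: (a) 0 ≤ α*_t ≤ 1; (b) β*_t = α*_t·(1 − ∑_{t' < t} β*_{t'} − α*_t/2), so (α*, β*) is feasible for the optimization program; and (c) for every T ≥ 1, ∑_{t=1}^T β*_t = γ_T. -/
/-- The recursively defined `α*_t = 1 - ∑_{t'<t} β*_{t'}`, `β*_t = (α*_t)²/2`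
satisfy: `0 ≤ α*_t ≤ 1`; feasibility
`β*_t = α*_t (1 - ∑_{t'<t} β*_{t'} - α*_t/2)`; and `∑_{t=1}^T β*_t = γ_T`
where `γ₁ = 1/2`, `γ_{t+1} = (1 + γ_t²)/2`. -/
theorem multi_chance_opt_optimal_solution
    (γ : ℕ → ℝ) (h1 : γ 1 = 1 / 2)
    (hrec : ∀ t ≥ 1, γ (t + 1) = (1 + (γ t) ^ 2) / 2)
    (α β : ℕ → ℝ)
    (hα : ∀ t ≥ 1, α t = 1 - ∑ t' ∈ Finset.Ico 1 t, β t')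
    (hβ : ∀ t ≥ 1, β t = (α t) ^ 2 / 2) :
    (∀ t ≥ 1, 0 ≤ α t ∧ α t ≤ 1)
    ∧ (∀ t ≥ 1, β t = α t * (1 - (∑ t' ∈ Finset.Ico 1 t, β t') - α t / 2))
    ∧ (∀ T ≥ 1, ∑ t ∈ Finset.Icc 1 T, β t = γ T) := by
  have hstep : ∀ t ≥ 1, α (t + 1) = α t - β t := by
    intro t ht
    rw [hα (t + 1) (by omega), hα t ht, Finset.sum_Ico_succ_top ht]
    ring
  have hα1 : α 1 = 1 := by
    rw [hα 1 le_rfl]; simp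
  refine ⟨?_, ?_, ?_⟩
  · intro t ht
    induction t, ht using Nat.le_induction with
    | base => rw [hα1]; norm_num
    | succ t ht ih =>
      obtain ⟨h0, h2⟩ := ih
      rw [hstep t ht, hβ t ht]
      constructor <;> nlinarith
  · intro t ht
    rw [← hα t ht, hβ t ht]
    ring
  · have key : ∀ T ≥ 1, α (T + 1) = 1 - γ T := by
      intro T hT
      induction T, hT using Nat.le_induction with
      | base => rw [hstep 1 le_rfl, hβ 1 le_rfl, hα1, h1]; norm_num
      | succ t ht ih =>
        rw [hstep (t + 1) (by omega), hβ (t + 1) (by omega), ih, hrec t ht]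
        ring
    intro T hT
    have h := hα (T + 1) (by omega)
    have e : Finset.Ico 1 (T + 1) = Finset.Icc 1 T := by
      ext x; simp only [Finset.mem_Ico, Finset.mem_Icc]; omega
    rw [e, key T hT] at h
    linarith
end

section
/- Define γ₁ = 1/2, γ_{t+1} = (1 + γ_t²)/2, α*_t = 1 − ∑_{t' < t} β*_{t'}, and β*_t = (α*_t)²/2. Let k ≥ 1 be a real number and T ≥ 1 an integer, and define β̄_t = β*_t − α*_t·(∑_{t' < t} α*_{t'})/k for t ∈ {1,…,T}. Then: (1) for every t ∈ {1,…,T}, β̄_t ≤ α*_t·(1 − ∑_{t' < t} β̄_{t'} − α*_t/2) − α*_t·(∑_{t' < t} α*_{t'})/k, i.e., (α*, β̄) is feasible for the perturbed program; and (2) ∑_{t=1}^T β̄_t ≥ γ_T − T²/k. -/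
/-- Perturbed parameters `β̄_t = β*_t - α*_t (∑_{t'<t} α*_{t'})/k` are feasible
for the perturbed `T`-chance program and satisfy
`∑_{t=1}^T β̄_t ≥ γ_T - T²/k`, where `γ₁ = 1/2`, `γ_{t+1} = (1 + γ_t²)/2`,
`α*_t = 1 - ∑_{t'<t} β*_{t'}`, `β*_t = (α*_t)²/2`. -/
theorem multi_chance_perturbed_solution
    (γ : ℕ → ℝ) (h1 : γ 1 = 1 / 2)
    (hrec : ∀ t ≥ 1, γ (t + 1) = (1 + (γ t) ^ 2) / 2)
    (α β : ℕ → ℝ)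
    (hα : ∀ t ≥ 1, α t = 1 - ∑ t' ∈ Finset.Ico 1 t, β t')
    (hβ : ∀ t ≥ 1, β t = (α t) ^ 2 / 2)
    (k : ℝ) (hk : 1 ≤ k) (T : ℕ) (hT : 1 ≤ T)
    (βbar : ℕ → ℝ)
    (hβbar : ∀ t ≥ 1, βbar t = β t - α t * (∑ t' ∈ Finset.Ico 1 t, α t') / k) :
    (∀ t ∈ Finset.Icc 1 T,
        βbar t ≤ α t * (1 - (∑ t' ∈ Finset.Ico 1 t, βbar t') - α t / 2)
                  - α t * (∑ t' ∈ Finset.Ico 1 t, α t') / k)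
    ∧ (∑ t ∈ Finset.Icc 1 T, βbar t ≥ γ T - (T : ℝ) ^ 2 / k) := by
  have hk0 : 0 < k := by linarith
  have hstep : ∀ t ≥ 1, α (t + 1) = α t - (α t) ^ 2 / 2 := by
    intro t ht
    rw [hα (t + 1) (by omega), Finset.sum_Ico_succ_top ht, ← hβ t ht, hα t ht]
    ring
  have hα1 : α 1 = 1 := by
    rw [hα 1 le_rfl]; simp
  have hb : ∀ t ≥ 1, 0 ≤ α t ∧ α t ≤ 1 := by
    intro t ht
    induction t, ht using Nat.le_induction with
    | base => rw [hα1]; norm_num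
    | succ t ht ih =>
      obtain ⟨h0, h2⟩ := ih
      rw [hstep t ht]
      constructor <;> nlinarith
  have hγ : ∀ t ≥ 1, γ t = 1 - α (t + 1) := by
    intro t ht
    induction t, ht using Nat.le_induction with
    | base => rw [hstep 1 le_rfl, hα1, h1]; norm_num
    | succ t ht ih =>
      rw [hrec t ht, hstep (t + 1) (by omega), ih]
      ring
  have hS0 : ∀ t, 0 ≤ ∑ t' ∈ Finset.Ico 1 t, α t' := fun t =>
    Finset.sum_nonneg fun i hi => (hb i (Finset.mem_Ico.1 hi).1).1
  have hS1 : ∀ t, ∑ t' ∈ Finset.Ico 1 t, α t' ≤ t := by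
    intro t
    have h := Finset.sum_le_card_nsmul (Finset.Ico 1 t) α 1
      fun i hi => (hb i (Finset.mem_Ico.1 hi).1).2
    rw [Nat.card_Ico, nsmul_eq_mul, mul_one] at h
    exact h.trans (by exact_mod_cast Nat.sub_le t 1)
  refine ⟨?_, ?_⟩
  · intro t ht
    have ht1 := (Finset.mem_Icc.1 ht).1
    have hle : ∑ t' ∈ Finset.Ico 1 t, βbar t' ≤ ∑ t' ∈ Finset.Ico 1 t, β t' := by
      apply Finset.sum_le_sum
      intro i hi
      have hi1 := (Finset.mem_Ico.1 hi).1
      rw [hβbar i hi1]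
      have := div_nonneg (mul_nonneg (hb i hi1).1 (hS0 i)) hk0.le
      linarith
    rw [hβbar t ht1, hβ t ht1]
    have h3 := hα t ht1
    have h4 : α t / 2 ≤ 1 - (∑ t' ∈ Finset.Ico 1 t, βbar t') - α t / 2 := by linarith
    have h5 := mul_le_mul_of_nonneg_left h4 (hb t ht1).1
    nlinarith
  · have hsum : ∑ t ∈ Finset.Icc 1 T, β t = γ T := by
      have h := hα (T + 1) (by omega)
      have e : Finset.Ico 1 (T + 1) = Finset.Icc 1 T := by
        ext x; simp only [Finset.mem_Ico, Finset.mem_Icc]; omega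
      rw [e] at h
      rw [hγ T hT]; linarith
    have hlow : ∑ t ∈ Finset.Icc 1 T, (β t - (T : ℝ) / k) ≤ ∑ t ∈ Finset.Icc 1 T, βbar t := by
      apply Finset.sum_le_sum
      intro t ht
      obtain ⟨ht1, htT⟩ := Finset.mem_Icc.1 ht
      rw [hβbar t ht1]
      have hc : (t : ℝ) ≤ T := by exact_mod_cast htT
      have : α t * (∑ t' ∈ Finset.Ico 1 t, α t') ≤ T := by
        nlinarith [hb t ht1, hS0 t, hS1 t, mul_le_mul_of_nonneg_right (hb t ht1).2 (hS0 t)]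
      have := div_le_div_of_nonneg_right this hk0.le
      linarith
    rw [Finset.sum_sub_distrib, hsum, Finset.sum_const, Nat.card_Icc, nsmul_eq_mul] at hlow
    have e : ((T + 1 - 1 : ℕ) : ℝ) * ((T : ℝ) / k) = (T : ℝ) ^ 2 / k := by
      rw [Nat.add_sub_cancel]; ring
    rw [e] at hlow
    exact hlow
end

section
/- For every real number δ ≥ 0, e^δ / (1+δ)^{1+δ} ≤ exp(−δ²/(2+δ)). Equivalently, δ − (1+δ)·log(1+δ) ≤ −δ²/(2+δ). -/
/-- For every `δ ≥ 0`, `e^δ / (1+δ)^(1+δ) ≤ exp (-δ²/(2+δ))`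
(with `(1+δ)^(1+δ)` the real power); equivalently,
`δ - (1+δ) log (1+δ) ≤ -δ²/(2+δ)`. -/
theorem chernoff_exponent_bound (δ : ℝ) (hδ : 0 ≤ δ) :
    Real.exp δ / (1 + δ) ^ (1 + δ) ≤ Real.exp (-(δ ^ 2) / (2 + δ))
    ∧ δ - (1 + δ) * Real.log (1 + δ) ≤ -(δ ^ 2) / (2 + δ) := by
  have h2 : δ - (1 + δ) * Real.log (1 + δ) ≤ -(δ ^ 2) / (2 + δ) := by
    have h := mul_le_mul_of_nonneg_left (Real.le_log_one_add_of_nonneg hδ)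
      (by linarith : (0 : ℝ) ≤ 1 + δ)
    have e : -(δ ^ 2) / (2 + δ) = δ - (1 + δ) * (2 * δ / (δ + 2)) := by
      have h3 : δ + 2 ≠ 0 := by positivity
      rw [add_comm 2 δ]
      field_simp
      ring
    rw [e]
    linarith
  refine ⟨?_, h2⟩
  rw [Real.rpow_def_of_pos (by linarith : (0 : ℝ) < 1 + δ), ← Real.exp_sub]
  apply Real.exp_le_exp.mpr
  linarith
end
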